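/- arXiv:2402.01990 — 2 statements merged into one kernel-verified Lean document; each statement's English description precedes it below -/
import Mathlib

section
/- For every u : V → ℝ one has ∫_V |∇u|² dμ ≤ (1/λ₁) ∫_V (Δu)² dμ, where λ₁ = inf{ ∫_V |∇v|² dμ : ∫_V v dμ = 0, ∫_V v² dμ = 1 }. Consequently, max_V u − min_V u ≤ √((m−1)·|V| / (w₀·λ₁)) · max_{x∈V} |Δu(x)|, where m is the number of vertices and w₀ = min of the positive weights. -/
/-!
Write `E(u) = ∫ |∇u|² dμ = ½ ∑ₓ ∑ᵧ w x y (u y - u x)²`, `D(u) = ∫ (Δu)² dμ`, and let `m` be the number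
of vertices.

* **Path estimate** (`path_estimate`, `osc_sq_le`). Along a path from `x` to `y`, which has at most
  `m - 1` edges, Cauchy–Schwarz gives `w₀ (u x - u y)² ≤ (m - 1) E(u)`.
* **Spectral gap** (`poincare`, `spectral_gap`). If `∫ v = 0`, then at each vertex `v` is bounded by its
  oscillation, so the path estimate gives `w₀ ∫ v² ≤ (m - 1) |V| E(v)`; hence `λ₁ > 0`. By scaling,
  `λ₁ ∫ v² ≤ E(v)` for all mean-zero `v`.
* **First inequality** (`energy_le`). For `v = u - mean`, Green's formula and Cauchy–Schwarz give
  `E(u)² = (∫ v Δu)² ≤ ∫ v² · D(u) ≤ E(u) D(u) / λ₁`.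
* **Second inequality.** Combine the path estimate, the first inequality and `D(u) ≤ |V| max |Δu|²`.
-/

open Real

/-- Graph Laplacian: `Δu(x) = (1/μ(x)) Σ_y w x y (u y − u x)`. -/
noncomputable def glap {V : Type*} [Fintype V] (w : V → V → ℝ) (μ : V → ℝ)
    (u : V → ℝ) (x : V) : ℝ :=
  (1 / μ x) * ∑ y, w x y * (u y - u x)

/-- Integral over the graph: `∫_V g dμ = Σ_x μ(x) g(x)`. -/
noncomputable def gint {V : Type*} [Fintype V] (μ : V → ℝ) (g : V → ℝ) : ℝ :=
  ∑ x, μ x * g x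

/-- Gradient norm squared: `|∇u|²(x) = (1/(2μ(x))) Σ_y w x y (u y − u x)²`. -/
noncomputable def gradsq {V : Type*} [Fintype V] (w : V → V → ℝ) (μ : V → ℝ)
    (u : V → ℝ) (x : V) : ℝ :=
  (1 / (2 * μ x)) * ∑ y, w x y * (u y - u x) ^ 2

/-- The functional `J_λ(u) = (1/2)∫|∇u|² + (λ/(2p+2))∫(e^u−1)^{2p+2} + ∫ f u dμ`. -/
noncomputable def Jfun {V : Type*} [Fintype V] (w : V → V → ℝ) (μ : V → ℝ)
    (p : ℕ) (lam : ℝ) (f : V → ℝ) (u : V → ℝ) : ℝ :=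
  (1 / 2) * gint μ (gradsq w μ u)
    + (lam / (2 * p + 2)) * gint μ (fun x => (Real.exp (u x) - 1) ^ (2 * p + 2))
    + gint μ (fun x => f x * u x)

section GraphPoincare

variable {V : Type*}

/-- The path estimate in a form suited to induction: only the energy carried by pairs of vertices
of the path is counted. Prepending a vertex `x` adjacent to `z` adds both `(x, z)` and `(z, x)` to
these pairs, which compensates the factor `1 / 2`. -/
lemma path_estimate [DecidableEq V] (w : V → V → ℝ) (hsymm : ∀ x y, w x y = w y x)
    (hnonneg : ∀ x y, 0 ≤ w x y) (w₀ : ℝ) (hw₀pos : 0 < w₀)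
    (hw₀ : ∀ x y, 0 < w x y → w₀ ≤ w x y) (u : V → ℝ) {x y : V}
    (p : (SimpleGraph.fromRel (fun x y => 0 < w x y)).Walk x y) (hp : p.IsPath) :
    w₀ * (u x - u y) ^ 2 ≤ p.length * ((1 / 2) *
      ∑ a ∈ p.support.toFinset, ∑ b ∈ p.support.toFinset, w a b * (u b - u a) ^ 2) := by
  induction p with
  | nil => simp
  | @cons x z y h p ih =>
    rw [SimpleGraph.Walk.cons_isPath_iff] at hp
    have ih := ih hp.1
    have hx : x ∉ p.support.toFinset := by simpa using hp.2
    have hz : z ∈ p.support.toFinset := by simp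
    rw [SimpleGraph.Walk.support_cons, List.toFinset_cons, SimpleGraph.Walk.length_cons]
    set S := p.support.toFinset with hS
    set F : V → V → ℝ := fun a b => w a b * (u b - u a) ^ 2 with hF
    have hF0 : ∀ a b, 0 ≤ F a b := fun a b => mul_nonneg (hnonneg a b) (sq_nonneg _)
    change w₀ * (u z - u y) ^ 2 ≤ p.length * ((1 / 2) * ∑ a ∈ S, ∑ b ∈ S, F a b) at ih
    change _ ≤ ((p.length + 1 : ℕ) : ℝ) *
      ((1 / 2) * ∑ a ∈ insert x S, ∑ b ∈ insert x S, F a b)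
    have hsplit : ∑ a ∈ insert x S, ∑ b ∈ insert x S, F a b
        = F x x + ∑ b ∈ S, F x b + (∑ a ∈ S, F a x + ∑ a ∈ S, ∑ b ∈ S, F a b) := by
      simp only [Finset.sum_insert hx, Finset.sum_add_distrib]
    have e1 : F x z ≤ ∑ b ∈ S, F x b := Finset.single_le_sum (fun b _ => hF0 x b) hz
    have e2 : F z x ≤ ∑ a ∈ S, F a x :=
      Finset.single_le_sum (f := fun a => F a x) (fun a _ => hF0 a x) hz
    have hwz : w₀ ≤ w x z := by
      rw [SimpleGraph.fromRel_adj] at h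
      rcases h.2 with h | h
      · exact hw₀ _ _ h
      · rw [hsymm]; exact hw₀ _ _ h
    have e3 : w₀ * (u x - u z) ^ 2 ≤ F x z := by
      have := mul_le_mul_of_nonneg_right hwz (sq_nonneg (u z - u x))
      simp only [hF]
      nlinarith
    have e4 : F z x = F x z := by
      simp only [hF]
      rw [hsymm z x]
      ring
    have e5 := hF0 x x
    have hE : (1 / 2) * ∑ a ∈ S, ∑ b ∈ S, F a b + F x z
        ≤ (1 / 2) * ∑ a ∈ insert x S, ∑ b ∈ insert x S, F a b := by
      rw [hsplit]
      linarith
    set A := (1 / 2) * ∑ a ∈ S, ∑ b ∈ S, F a b with hA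
    have hA0 : 0 ≤ A := mul_nonneg (by norm_num)
      (Finset.sum_nonneg fun a _ => Finset.sum_nonneg fun b _ => hF0 a b)
    refine le_trans ?_ (mul_le_mul_of_nonneg_left hE (Nat.cast_nonneg _))
    push_cast
    set n : ℝ := (p.length : ℝ) with hn
    have hn0 : 0 ≤ n := Nat.cast_nonneg _
    have hxy : u x - u y = (u x - u z) + (u z - u y) := by ring
    rw [hxy]
    generalize u x - u z = d at *
    generalize u z - u y = D at *
    rcases hn0.eq_or_lt with h0 | hpos
    · rw [← h0] at ih ⊢
      have hD : D = 0 := by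
        have : D ^ 2 ≤ 0 := by nlinarith
        nlinarith [pow_eq_zero_iff (two_ne_zero) |>.1 (le_antisymm this (sq_nonneg D))]
      rw [hD]
      nlinarith
    · -- Cauchy–Schwarz: `(d + D)² ≤ (n + 1) (d² + D² / n)`, cleared of the denominator.
      have c1 : n * (d + D) ^ 2 ≤ (n + 1) * (n * d ^ 2 + D ^ 2) := by
        nlinarith [sq_nonneg (n * d - D)]
      have c2 : w₀ * (n * d ^ 2 + D ^ 2) ≤ n * (A + F x z) := by nlinarith
      have c3 : n * (w₀ * (d + D) ^ 2) ≤ n * ((n + 1) * (A + F x z)) := by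
        calc n * (w₀ * (d + D) ^ 2) = w₀ * (n * (d + D) ^ 2) := by ring
          _ ≤ w₀ * ((n + 1) * (n * d ^ 2 + D ^ 2)) := mul_le_mul_of_nonneg_left c1 hw₀pos.le
          _ = (n + 1) * (w₀ * (n * d ^ 2 + D ^ 2)) := by ring
          _ ≤ (n + 1) * (n * (A + F x z)) := mul_le_mul_of_nonneg_left c2 (by linarith)
          _ = _ := by ring
      exact le_of_mul_le_mul_left c3 hpos

variable [Fintype V]

lemma gint_gradsq (w : V → V → ℝ) (μ : V → ℝ) (hμ : ∀ x, 0 < μ x) (u : V → ℝ) :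
    gint μ (gradsq w μ u) = (1 / 2) * ∑ x, ∑ y, w x y * (u y - u x) ^ 2 := by
  unfold gint gradsq
  rw [Finset.mul_sum]
  refine Finset.sum_congr rfl fun x _ => ?_
  have := (hμ x).ne'
  field_simp

lemma energy_nonneg (w : V → V → ℝ) (μ : V → ℝ) (hnonneg : ∀ x y, 0 ≤ w x y)
    (hμ : ∀ x, 0 < μ x) (u : V → ℝ) : 0 ≤ gint μ (gradsq w μ u) := by
  rw [gint_gradsq w μ hμ]
  exact mul_nonneg (by norm_num) (Finset.sum_nonneg fun x _ => Finset.sum_nonneg fun y _ =>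
    mul_nonneg (hnonneg x y) (sq_nonneg _))

lemma gint_sq_nonneg (μ : V → ℝ) (hμ : ∀ x, 0 < μ x) (g : V → ℝ) :
    0 ≤ gint μ (fun x => (g x) ^ 2) :=
  Finset.sum_nonneg fun x _ => mul_nonneg (hμ x).le (sq_nonneg _)

/-- Green's formula `∫ u Δu dμ = -∫ |∇u|² dμ`, by symmetrising the double sum. -/
lemma green (w : V → V → ℝ) (μ : V → ℝ) (hsymm : ∀ x y, w x y = w y x)
    (hμ : ∀ x, 0 < μ x) (u : V → ℝ) :
    gint μ (fun x => u x * glap w μ u x) = - gint μ (gradsq w μ u) := by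
  rw [gint_gradsq w μ hμ]
  have h1 : gint μ (fun x => u x * glap w μ u x) = ∑ x, ∑ y, w x y * (u x * (u y - u x)) := by
    unfold gint glap
    refine Finset.sum_congr rfl fun x _ => ?_
    have h := (hμ x).ne'
    have : μ x * (u x * (1 / μ x * ∑ y, w x y * (u y - u x)))
        = u x * ∑ y, w x y * (u y - u x) := by field_simp
    rw [this, Finset.mul_sum]
    exact Finset.sum_congr rfl fun y _ => by ring
  have h2 : ∑ x, ∑ y, w x y * (u x * (u y - u x)) = ∑ x, ∑ y, w x y * (u y * (u x - u y)) := by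
    rw [Finset.sum_comm]
    exact Finset.sum_congr rfl fun x _ => Finset.sum_congr rfl fun y _ => by rw [hsymm]
  have h3 : ∑ x, ∑ y, w x y * (u x * (u y - u x)) + ∑ x, ∑ y, w x y * (u y * (u x - u y))
      = - ∑ x, ∑ y, w x y * (u y - u x) ^ 2 := by
    simp only [← Finset.sum_add_distrib, ← Finset.sum_neg_distrib]
    exact Finset.sum_congr rfl fun x _ => Finset.sum_congr rfl fun y _ => by ring
  rw [h1]
  linarith

lemma osc_sq_le (w : V → V → ℝ) (μ : V → ℝ) (hsymm : ∀ x y, w x y = w y x)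
    (hnonneg : ∀ x y, 0 ≤ w x y) (hμ : ∀ x, 0 < μ x)
    (hconn : (SimpleGraph.fromRel (fun x y => 0 < w x y)).Connected)
    (w₀ : ℝ) (hw₀pos : 0 < w₀) (hw₀ : ∀ x y, 0 < w x y → w₀ ≤ w x y) (u : V → ℝ) (x y : V) :
    w₀ * (u x - u y) ^ 2 ≤ ((Fintype.card V : ℝ) - 1) * gint μ (gradsq w μ u) := by
  classical
  obtain ⟨p, hp⟩ := hconn.exists_isPath x y
  have h1 := path_estimate w hsymm hnonneg w₀ hw₀pos hw₀ u p hp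
  have hlen : (p.length : ℝ) ≤ (Fintype.card V : ℝ) - 1 := by
    have : p.length + 1 ≤ Fintype.card V := hp.length_lt
    have : ((p.length + 1 : ℕ) : ℝ) ≤ Fintype.card V := by exact_mod_cast this
    push_cast at this
    linarith
  have hF0 : ∀ a b, 0 ≤ w a b * (u b - u a) ^ 2 := fun a b =>
    mul_nonneg (hnonneg a b) (sq_nonneg _)
  have h2 : (1 / 2) * ∑ a ∈ p.support.toFinset, ∑ b ∈ p.support.toFinset, w a b * (u b - u a) ^ 2
      ≤ gint μ (gradsq w μ u) := by
    rw [gint_gradsq w μ hμ]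
    refine mul_le_mul_of_nonneg_left ?_ (by norm_num)
    calc _ ≤ ∑ a ∈ p.support.toFinset, ∑ b, w a b * (u b - u a) ^ 2 :=
          Finset.sum_le_sum fun a _ =>
            Finset.sum_le_univ_sum_of_nonneg fun b => hF0 a b
      _ ≤ _ := Finset.sum_le_univ_sum_of_nonneg fun a => Finset.sum_nonneg fun b _ => hF0 a b
  calc _ ≤ _ := h1
    _ ≤ p.length * gint μ (gradsq w μ u) := mul_le_mul_of_nonneg_left h2 (Nat.cast_nonneg _)
    _ ≤ _ := mul_le_mul_of_nonneg_right hlen (energy_nonneg w μ hnonneg hμ u)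

/-- A Poincaré inequality with an explicit constant. At each vertex `z`, a mean-zero function `v`
satisfies `(v z)² ≤ (v z - v y)²` for some `y`, since `v` cannot have a constant strict sign. -/
lemma poincare [Nonempty V] (w : V → V → ℝ) (μ : V → ℝ) (hsymm : ∀ x y, w x y = w y x)
    (hnonneg : ∀ x y, 0 ≤ w x y) (hμ : ∀ x, 0 < μ x)
    (hconn : (SimpleGraph.fromRel (fun x y => 0 < w x y)).Connected)
    (w₀ : ℝ) (hw₀pos : 0 < w₀) (hw₀ : ∀ x y, 0 < w x y → w₀ ≤ w x y) (v : V → ℝ)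
    (hv : gint μ v = 0) :
    w₀ * gint μ (fun x => (v x) ^ 2) ≤
      gint μ (fun _ => 1) * (((Fintype.card V : ℝ) - 1) * gint μ (gradsq w μ v)) := by
  have key : ∀ z, w₀ * (v z) ^ 2 ≤ ((Fintype.card V : ℝ) - 1) * gint μ (gradsq w μ v) := by
    intro z
    obtain ⟨y, hy⟩ : ∃ y, v z * v y ≤ 0 := by
      by_contra! hcon
      have : 0 < ∑ y, μ y * (v z * v y) :=
        Finset.sum_pos (fun y _ => mul_pos (hμ y) (hcon y)) Finset.univ_nonempty
      have h2 : ∑ y, μ y * (v z * v y) = v z * gint μ v := by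
        unfold gint
        rw [Finset.mul_sum]
        exact Finset.sum_congr rfl fun y _ => by ring
      rw [h2, hv, mul_zero] at this
      exact lt_irrefl _ this
    refine le_trans ?_ (osc_sq_le w μ hsymm hnonneg hμ hconn w₀ hw₀pos hw₀ v z y)
    exact mul_le_mul_of_nonneg_left (by nlinarith [sq_nonneg (v y)]) hw₀pos.le
  unfold gint at key ⊢
  rw [Finset.mul_sum, Finset.sum_mul]
  refine Finset.sum_le_sum fun z _ => ?_
  have := mul_le_mul_of_nonneg_left (key z) (hμ z).le
  linarith

lemma energy_smul (w : V → V → ℝ) (μ : V → ℝ) (c : ℝ) (v : V → ℝ) :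
    gint μ (gradsq w μ (fun x => c * v x)) = c ^ 2 * gint μ (gradsq w μ v) := by
  unfold gint gradsq
  rw [Finset.mul_sum]
  refine Finset.sum_congr rfl fun x _ => ?_
  have : ∑ y, w x y * (c * v y - c * v x) ^ 2 = c ^ 2 * ∑ y, w x y * (v y - v x) ^ 2 := by
    rw [Finset.mul_sum]
    exact Finset.sum_congr rfl fun y _ => by ring
  rw [this]
  ring

/-- The values of the Dirichlet energy on mean-zero functions of unit `L²` norm; `λ₁` is its
infimum. -/
def rayleighSet (w : V → V → ℝ) (μ : V → ℝ) : Set ℝ :=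
  { t : ℝ | ∃ v : V → ℝ, gint μ v = 0 ∧ gint μ (fun x => (v x) ^ 2) = 1
    ∧ t = gint μ (gradsq w μ v) }

lemma div_mem_rayleighSet (w : V → V → ℝ) (μ : V → ℝ) (v : V → ℝ) (hv : gint μ v = 0)
    (hpos : 0 < gint μ (fun x => (v x) ^ 2)) :
    gint μ (gradsq w μ v) / gint μ (fun x => (v x) ^ 2) ∈ rayleighSet w μ := by
  set N := gint μ (fun x => (v x) ^ 2) with hN
  have hc : ((√N)⁻¹) ^ 2 = N⁻¹ := by rw [inv_pow, Real.sq_sqrt hpos.le]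
  refine ⟨fun x => (√N)⁻¹ * v x, ?_, ?_, ?_⟩
  · have : gint μ (fun x => (√N)⁻¹ * v x) = (√N)⁻¹ * gint μ v := by
      unfold gint
      rw [Finset.mul_sum]
      exact Finset.sum_congr rfl fun y _ => by ring
    rw [this, hv, mul_zero]
  · have : gint μ (fun x => ((√N)⁻¹ * v x) ^ 2) = ((√N)⁻¹) ^ 2 * N := by
      rw [hN]
      unfold gint
      rw [Finset.mul_sum]
      exact Finset.sum_congr rfl fun y _ => by ring
    rw [this, hc, inv_mul_cancel₀ hpos.ne']
  · rw [energy_smul, hc, div_eq_inv_mul]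

/-- The spectral gap: `λ₁` is positive and `λ₁ ∫ v² ≤ ∫ |∇v|²`. The nonzero mean-zero `v` also witnesses
that the infimum is over a nonempty set, so that `sInf` does not take its default value. -/
lemma spectral_gap [Nonempty V] (w : V → V → ℝ) (μ : V → ℝ) (hsymm : ∀ x y, w x y = w y x)
    (hnonneg : ∀ x y, 0 ≤ w x y) (hμ : ∀ x, 0 < μ x) (hcard : 2 ≤ Fintype.card V)
    (hconn : (SimpleGraph.fromRel (fun x y => 0 < w x y)).Connected)
    (w₀ : ℝ) (hw₀pos : 0 < w₀) (hw₀ : ∀ x y, 0 < w x y → w₀ ≤ w x y) (v : V → ℝ)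
    (hv : gint μ v = 0) (hpos : 0 < gint μ (fun x => (v x) ^ 2)) :
    0 < sInf (rayleighSet w μ) ∧
      sInf (rayleighSet w μ) * gint μ (fun x => (v x) ^ 2) ≤ gint μ (gradsq w μ v) := by
  have hmem := div_mem_rayleighSet w μ v hv hpos
  have hV : 0 < gint μ (fun _ => 1) :=
    Finset.sum_pos (fun x _ => by simpa using hμ x) Finset.univ_nonempty
  have hm : 0 < (Fintype.card V : ℝ) - 1 := by
    have : (2 : ℝ) ≤ Fintype.card V := by exact_mod_cast hcard
    linarith
  constructor
  · have hc : 0 < w₀ / (gint μ (fun _ => 1) * ((Fintype.card V : ℝ) - 1)) := by positivity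
    refine lt_of_lt_of_le hc (le_csInf ⟨_, hmem⟩ ?_)
    rintro t ⟨f, hf0, hf1, rfl⟩
    have := poincare w μ hsymm hnonneg hμ hconn w₀ hw₀pos hw₀ f hf0
    rw [hf1] at this
    rw [div_le_iff₀ (by positivity)]
    linarith
  · rw [← le_div_iff₀ hpos]
    refine csInf_le ⟨0, ?_⟩ hmem
    rintro t ⟨f, -, -, rfl⟩
    exact energy_nonneg w μ hnonneg hμ f

/-- The first inequality for nonconstant `u`, together with positivity of `λ₁`. -/
lemma energy_le [Nonempty V] (w : V → V → ℝ) (μ : V → ℝ) (hsymm : ∀ x y, w x y = w y x)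
    (hnonneg : ∀ x y, 0 ≤ w x y) (hμ : ∀ x, 0 < μ x) (hcard : 2 ≤ Fintype.card V)
    (hconn : (SimpleGraph.fromRel (fun x y => 0 < w x y)).Connected)
    (w₀ : ℝ) (hw₀pos : 0 < w₀) (hw₀ : ∀ x y, 0 < w x y → w₀ ≤ w x y) (u : V → ℝ)
    (hu : 0 < gint μ (gradsq w μ u)) :
    0 < sInf (rayleighSet w μ) ∧
      sInf (rayleighSet w μ) * gint μ (gradsq w μ u) ≤ gint μ (fun x => (glap w μ u x) ^ 2) := by
  have hV : 0 < gint μ (fun _ => 1) :=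
    Finset.sum_pos (fun x _ => by simpa using hμ x) Finset.univ_nonempty
  set c := gint μ u / gint μ (fun _ => 1) with hc
  set v : V → ℝ := fun x => u x - c with hv
  have hv0 : gint μ v = 0 := by
    have : gint μ v = gint μ u - c * gint μ (fun _ => 1) := by
      unfold gint
      rw [Finset.mul_sum, ← Finset.sum_sub_distrib]
      exact Finset.sum_congr rfl fun x _ => by simp only [hv]; ring
    rw [this, hc, div_mul_cancel₀ _ hV.ne', sub_self]
  have hg : gradsq w μ v = gradsq w μ u := by
    funext x
    simp [gradsq, hv]
  have hl : glap w μ v = glap w μ u := by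
    funext x
    simp [glap, hv]
  have hgreen := green w μ hsymm hμ v
  rw [hg, hl] at hgreen
  set E := gint μ (gradsq w μ u) with hE
  set D := gint μ (fun x => (glap w μ u x) ^ 2) with hD
  set N := gint μ (fun x => (v x) ^ 2) with hN
  have hCS : E ^ 2 ≤ N * D := by
    -- Splitting `μ` as `√μ * √μ` turns the weighted inequality into the unweighted one.
    have h := Finset.sum_mul_sq_le_sq_mul_sq Finset.univ
      (fun x => √(μ x) * v x) (fun x => √(μ x) * glap w μ u x)
    have r1 : ∑ x, √(μ x) * v x * (√(μ x) * glap w μ u x) = -E := by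
      rw [← hgreen]
      refine Finset.sum_congr rfl fun x _ => ?_
      linear_combination (v x * glap w μ u x) * Real.mul_self_sqrt (hμ x).le
    have r2 : ∑ x, (√(μ x) * v x) ^ 2 = N := by
      refine Finset.sum_congr rfl fun x _ => ?_
      rw [mul_pow, Real.sq_sqrt (hμ x).le]
    have r3 : ∑ x, (√(μ x) * glap w μ u x) ^ 2 = D := by
      refine Finset.sum_congr rfl fun x _ => ?_
      rw [mul_pow, Real.sq_sqrt (hμ x).le]
    rw [r1, r2, r3] at h
    linarith [neg_sq E]
  have hN0 : 0 ≤ N := gint_sq_nonneg μ hμ v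
  have hD0 : 0 ≤ D := gint_sq_nonneg μ hμ _
  have hNpos : 0 < N := by
    refine lt_of_le_of_ne hN0 fun h => ?_
    rw [← h] at hCS
    nlinarith
  obtain ⟨hl0, hgap⟩ :=
    spectral_gap w μ hsymm hnonneg hμ hcard hconn w₀ hw₀pos hw₀ v hv0 hNpos
  rw [hg] at hgap
  refine ⟨hl0, ?_⟩
  set L := sInf (rayleighSet w μ)
  have h1 : L * E ^ 2 ≤ E * D :=
    calc L * E ^ 2 ≤ L * (N * D) := mul_le_mul_of_nonneg_left hCS hl0.le
      _ = L * N * D := by ring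
      _ ≤ E * D := mul_le_mul_of_nonneg_right hgap hD0
  exact le_of_mul_le_mul_left (by linarith) hu

end GraphPoincare

theorem stmt_5 {V : Type*} [Fintype V] [Nonempty V]
    (w : V → V → ℝ) (μ : V → ℝ)
    (hsymm : ∀ x y, w x y = w y x) (hnonneg : ∀ x y, 0 ≤ w x y)
    (hμ : ∀ x, 0 < μ x)
    (hcard : 2 ≤ Fintype.card V)
    (hconn : (SimpleGraph.fromRel (fun x y => 0 < w x y)).Connected)
    (w₀ : ℝ) (hw₀pos : 0 < w₀)
    (hw₀ : IsLeast {c : ℝ | ∃ x y, 0 < w x y ∧ w x y = c} w₀)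
    (lam₁ : ℝ)
    (hlam₁ : lam₁ = sInf { t : ℝ | ∃ v : V → ℝ,
        gint μ v = 0 ∧ gint μ (fun x => (v x) ^ 2) = 1
        ∧ t = gint μ (gradsq w μ v) }) :
    (∀ u : V → ℝ,
      gint μ (gradsq w μ u) ≤ (1 / lam₁) * gint μ (fun x => (glap w μ u x) ^ 2))
    ∧ ∀ u : V → ℝ, ∀ x y : V,
      u x - u y ≤
        Real.sqrt (((Fintype.card V : ℝ) - 1) * gint μ (fun _ => 1) / (w₀ * lam₁))
          * (⨆ z, |glap w μ u z|) := by
  have hmin : ∀ x y, 0 < w x y → w₀ ≤ w x y := fun x y h => hw₀.2 ⟨x, y, h, rfl⟩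
  change lam₁ = sInf (rayleighSet w μ) at hlam₁
  have hlam0 : 0 ≤ lam₁ := by
    rw [hlam₁]
    refine Real.sInf_nonneg ?_
    rintro t ⟨f, -, -, rfl⟩
    exact energy_nonneg w μ hnonneg hμ f
  have hm : 0 ≤ (Fintype.card V : ℝ) - 1 := by
    have : (2 : ℝ) ≤ Fintype.card V := by exact_mod_cast hcard
    linarith
  constructor
  · intro u
    -- When the energy vanishes `u` is constant, so `u - mean` cannot be normalised, but only `0 ≤ λ₁` is needed.
    rcases (energy_nonneg w μ hnonneg hμ u).eq_or_lt with h0 | hpos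
    · rw [← h0]
      exact mul_nonneg (by positivity) (gint_sq_nonneg μ hμ _)
    · obtain ⟨hl, hle⟩ := energy_le w μ hsymm hnonneg hμ hcard hconn w₀ hw₀pos hmin u hpos
      rw [← hlam₁] at hl hle
      rw [one_div, ← div_eq_inv_mul, le_div_iff₀ hl]
      linarith
  · intro u x y
    set M := ⨆ z, |glap w μ u z| with hM
    have hMz : ∀ z, |glap w μ u z| ≤ M := fun z =>
      le_ciSup (f := fun z => |glap w μ u z|) (Set.finite_range _).bddAbove z
    have hM0 : 0 ≤ M := (abs_nonneg _).trans (hMz x)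
    have hosc := osc_sq_le w μ hsymm hnonneg hμ hconn w₀ hw₀pos hmin u x y
    rcases (energy_nonneg w μ hnonneg hμ u).eq_or_lt with h0 | hpos
    · rw [← h0, mul_zero] at hosc
      have hsq : (u x - u y) ^ 2 ≤ 0 := by
        by_contra! h
        exact absurd (mul_pos hw₀pos h) (not_lt.2 hosc)
      have : u x - u y = 0 := by
        simpa using le_antisymm hsq (sq_nonneg _)
      rw [this]
      positivity
    · obtain ⟨hl, hle⟩ := energy_le w μ hsymm hnonneg hμ hcard hconn w₀ hw₀pos hmin u hpos
      rw [← hlam₁] at hl hle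
      have hD : gint μ (fun z => (glap w μ u z) ^ 2) ≤ gint μ (fun _ => 1) * M ^ 2 := by
        unfold gint
        rw [Finset.sum_mul]
        refine Finset.sum_le_sum fun z _ => ?_
        rw [mul_one]
        refine mul_le_mul_of_nonneg_left ?_ (hμ z).le
        change (glap w μ u z) ^ 2 ≤ M ^ 2
        rw [← sq_abs (glap w μ u z)]
        exact pow_le_pow_left₀ (abs_nonneg _) (hMz z) 2
      have hfin : (u x - u y) ^ 2 ≤
          ((Fintype.card V : ℝ) - 1) * gint μ (fun _ => 1) / (w₀ * lam₁) * M ^ 2 := by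
        rw [div_mul_eq_mul_div, le_div_iff₀ (by positivity)]
        calc (u x - u y) ^ 2 * (w₀ * lam₁) = lam₁ * (w₀ * (u x - u y) ^ 2) := by ring
          _ ≤ lam₁ * (((Fintype.card V : ℝ) - 1) * gint μ (gradsq w μ u)) :=
            mul_le_mul_of_nonneg_left hosc hlam0
          _ = ((Fintype.card V : ℝ) - 1) * (lam₁ * gint μ (gradsq w μ u)) := by ring
          _ ≤ ((Fintype.card V : ℝ) - 1) * (gint μ (fun _ => 1) * M ^ 2) :=
            mul_le_mul_of_nonneg_left (hle.trans hD) hm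
          _ = _ := by ring
      have h := Real.le_sqrt_of_sq_le hfin
      rwa [Real.sqrt_mul' _ (sq_nonneg M), Real.sqrt_sq hM0] at h
end

section
/- Let Λ > 0, σ ∈ [0,1], λ ∈ ℝ and f : V → ℝ satisfy Λ⁻¹ ≤ |λ| ≤ Λ and Λ⁻¹ ≤ |∫_V f dμ|. If u : V → ℝ solves Δu(x) = λ·e^{u(x)}·(e^{u(x)} − σ)^{2p+1} + f(x) for all x ∈ V, then max_{x∈V} u(x) > ln min{1, 1/(4Λ²|V|)}. -/
/-!
Summing the equation against `μ` kills the Laplacian, since `w` is symmetric, so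
`∫ f = -λ ∫ e^u (e^u - σ)^{2p+1}`. If `e^u ≤ m := min 1 (1 / (4 Λ² |V|))` everywhere, then `e^u` and
`σ` both lie in `[0, 1]`, hence `|e^u - σ| ≤ 1`, and the integrand is at most `m` in absolute value.
Therefore `|∫ f| ≤ Λ m |V| ≤ 1 / (4 Λ) < 1 / Λ`, contradicting the lower bound on `|∫ f|`.
-/

open Real

/-- Divergence theorem on a finite weighted graph without boundary. -/
theorem gint_glap_eq_zero {V : Type*} [Fintype V] (w : V → V → ℝ) (μ : V → ℝ)
    (hsymm : ∀ x y, w x y = w y x) (hμ : ∀ x, 0 < μ x) (u : V → ℝ) :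
    gint μ (glap w μ u) = 0 := by
  have h1 : gint μ (glap w μ u) = ∑ x, ∑ y, w x y * (u y - u x) := by
    refine Finset.sum_congr rfl fun x _ => ?_
    have := (hμ x).ne'
    unfold glap
    field_simp
  have h2 : ∑ x, ∑ y, w x y * (u y - u x) = -∑ x, ∑ y, w x y * (u y - u x) := by
    conv_lhs => rw [Finset.sum_comm]
    simp only [← Finset.sum_neg_distrib]
    refine Finset.sum_congr rfl fun x _ => Finset.sum_congr rfl fun y _ => ?_
    rw [hsymm y x]
    ring
  linarith

theorem stmt_6 {V : Type*} [Fintype V] [Nonempty V]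
    (w : V → V → ℝ) (μ : V → ℝ)
    (hsymm : ∀ x y, w x y = w y x) (hnonneg : ∀ x y, 0 ≤ w x y)
    (hμ : ∀ x, 0 < μ x) (p : ℕ)
    (Λ : ℝ) (hΛ : 0 < Λ) (σ : ℝ) (hσ : σ ∈ Set.Icc (0 : ℝ) 1)
    (lam : ℝ) (f : V → ℝ)
    (hlam₁ : Λ⁻¹ ≤ |lam|) (hlam₂ : |lam| ≤ Λ) (hf : Λ⁻¹ ≤ |gint μ f|)
    (u : V → ℝ)
    (hu : ∀ x, glap w μ u x
        = lam * Real.exp (u x) * (Real.exp (u x) - σ) ^ (2 * p + 1) + f x) :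
    ∃ x : V, Real.log (min 1 (1 / (4 * Λ ^ 2 * gint μ (fun _ => 1)))) < u x := by
  by_contra! hcon
  set A := gint μ (fun _ => 1) with hA
  have hApos : 0 < A := by
    simpa [hA, gint] using Finset.sum_pos (fun x _ => hμ x) Finset.univ_nonempty
  set m := min 1 (1 / (4 * Λ ^ 2 * A)) with hm
  have hmpos : 0 < m := lt_min one_pos (by positivity)
  have hexp : ∀ x, Real.exp (u x) ≤ m := fun x => (Real.le_log_iff_exp_le hmpos).1 (hcon x)
  have hbound : ∀ x, |Real.exp (u x) * (Real.exp (u x) - σ) ^ (2 * p + 1)| ≤ m := by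
    intro x
    have h0 := Real.exp_pos (u x)
    have h1 : Real.exp (u x) ≤ 1 := (hexp x).trans (min_le_left _ _)
    have h2 : |Real.exp (u x) - σ| ≤ 1 :=
      abs_le.2 ⟨by linarith [hσ.2], by linarith [hσ.1]⟩
    rw [abs_mul, abs_pow, abs_of_pos h0]
    exact (mul_le_of_le_one_right h0.le (pow_le_one₀ (abs_nonneg _) h2)).trans (hexp x)
  have hsum : gint μ f
      = -(lam * ∑ x, μ x * (Real.exp (u x) * (Real.exp (u x) - σ) ^ (2 * p + 1))) := by
    have h := gint_glap_eq_zero w μ hsymm hμ u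
    rw [funext hu] at h
    have h' : lam * ∑ x, μ x * (Real.exp (u x) * (Real.exp (u x) - σ) ^ (2 * p + 1))
        + gint μ f = 0 := by
      rw [← h, gint, gint, Finset.mul_sum, ← Finset.sum_add_distrib]
      exact Finset.sum_congr rfl fun x _ => by ring
    linarith
  have hS : |∑ x, μ x * (Real.exp (u x) * (Real.exp (u x) - σ) ^ (2 * p + 1))| ≤ A * m := by
    refine (Finset.abs_sum_le_sum_abs _ _).trans ?_
    rw [hA, gint, Finset.sum_mul]
    refine Finset.sum_le_sum fun x _ => ?_
    rw [abs_mul, abs_of_pos (hμ x), mul_one]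
    exact mul_le_mul_of_nonneg_left (hbound x) (hμ x).le
  rw [hsum, abs_neg, abs_mul] at hf
  have h4 : Λ⁻¹ ≤ Λ * (A * (1 / (4 * Λ ^ 2 * A))) := calc
    Λ⁻¹ ≤ Λ * (A * m) := hf.trans (mul_le_mul hlam₂ hS (abs_nonneg _) hΛ.le)
    _ ≤ _ := by gcongr; exact min_le_right _ _
  have h5 : Λ * (A * (1 / (4 * Λ ^ 2 * A))) = Λ⁻¹ / 4 := by field_simp
  have h6 : 0 < Λ⁻¹ := inv_pos.2 hΛ
  linarith
end
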